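/- Let U = {a ∈ A_n : a a* = 1} and U₀ = {b ∈ U : the constant coefficient of b equals 1}. Then the map (λ, u) ↦ λ·u is a group isomorphism from N_{K/k}^{−1}(1) × U₀ onto U, where N_{K/k}^{−1}(1) = {λ ∈ K : λ λ̄ = 1} is the group of norm-one elements of K. -/

import Mathlib

open Polynomial Matrix

noncomputable section

abbrev TruncPoly (K : Type) [CommRing K] (n : ℕ) := AdjoinRoot (X ^ n : K[X])

def trStar (K : Type) [CommRing K] (σ : K →+* K) (n : ℕ) :
    TruncPoly K n →+* TruncPoly K n :=
  AdjoinRoot.lift ((AdjoinRoot.of _).comp σ) (-(AdjoinRoot.root _)) (by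
    have h : (AdjoinRoot.root (X ^ n : K[X])) ^ n = 0 := by
      rw [← AdjoinRoot.mk_X, ← map_pow, AdjoinRoot.mk_self]
    rw [eval₂_pow, eval₂_X, neg_pow, h, mul_zero])


/-- The `i`-th coefficient of an element of `K[x]/(x^n)`. -/
def trCoeff (K : Type) [CommRing K] (n : ℕ) (a : TruncPoly K n) (i : ℕ) : K :=
  (AdjoinRoot.modByMonicHom (monic_X_pow n) a).coeff i

/-- The group `{a ∈ A_n : a·a* = 1}` (as a submonoid of `A_n`). -/
def normOneGroup (K : Type) [Field K] (σ : K →+* K) (n : ℕ) :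
    Submonoid (TruncPoly K n) where
  carrier := {a | a * trStar K σ n a = 1}
  one_mem' := by simp
  mul_mem' := by
    intro a b ha hb
    have ha' : a * trStar K σ n a = 1 := ha
    have hb' : b * trStar K σ n b = 1 := hb
    show a * b * trStar K σ n (a * b) = 1
    rw [_root_.map_mul]
    calc a * b * (trStar K σ n a * trStar K σ n b)
        = (a * trStar K σ n a) * (b * trStar K σ n b) := by ring
      _ = 1 := by rw [ha', hb', one_mul]

/-- The group `N_{K/k}⁻¹(1) = {λ ∈ K : λ·σ(λ) = 1}` of norm-one elements of `K`. -/
def normOneK (K : Type) [Field K] (σ : K →+* K) : Submonoid K where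
  carrier := {lam | lam * σ lam = 1}
  one_mem' := by simp
  mul_mem' := by
    intro a b ha hb
    have ha' : a * σ a = 1 := ha
    have hb' : b * σ b = 1 := hb
    show a * b * σ (a * b) = 1
    rw [_root_.map_mul]
    calc a * b * (σ a * σ b) = (a * σ a) * (b * σ b) := by ring
      _ = 1 := by rw [ha', hb', one_mul]

/-- The subgroup `U₀ = {a ∈ A_n : a·a* = 1, a₀ = 1}` of elements of the unitary
group whose constant coefficient is `1`. -/
def normOneGroupConstOne (K : Type) [Field K] (σ : K →+* K) (n : ℕ) (hn : 0 < n) :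
    Submonoid (TruncPoly K n) where
  carrier := {a | a * trStar K σ n a = 1 ∧ trCoeff K n a 0 = 1}
  one_mem' := by
    constructor
    · simp
    · show (AdjoinRoot.modByMonicHom (monic_X_pow n) 1).coeff 0 = 1
      rw [← map_one (AdjoinRoot.mk (X ^ n : K[X])), AdjoinRoot.modByMonicHom_mk,
        Polynomial.modByMonic_eq_sub_mul_div,
        Polynomial.coeff_zero_eq_eval_zero]
      simp [zero_pow hn.ne']
  mul_mem' := by
    rintro a b ⟨ha1, ha2⟩ ⟨hb1, hb2⟩
    constructor
    · show a * b * trStar K σ n (a * b) = 1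
      rw [_root_.map_mul]
      calc a * b * (trStar K σ n a * trStar K σ n b)
          = (a * trStar K σ n a) * (b * trStar K σ n b) := by ring
        _ = 1 := by rw [ha1, hb1, one_mul]
    · have key : ∀ h : K[X], (h %ₘ (X ^ n : K[X])).coeff 0 = h.coeff 0 := by
        intro h
        rw [Polynomial.modByMonic_eq_sub_mul_div,
          Polynomial.coeff_zero_eq_eval_zero, Polynomial.coeff_zero_eq_eval_zero]
        simp [zero_pow hn.ne']
      obtain ⟨f, rfl⟩ := AdjoinRoot.mk_surjective a
      obtain ⟨g, rfl⟩ := AdjoinRoot.mk_surjective b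
      have hcf : ∀ f : K[X], trCoeff K n (AdjoinRoot.mk _ f) 0 = f.coeff 0 := by
        intro f
        show (AdjoinRoot.modByMonicHom (monic_X_pow n) (AdjoinRoot.mk _ f)).coeff 0 = _
        rw [AdjoinRoot.modByMonicHom_mk, key]
      rw [hcf] at ha2 hb2
      rw [← _root_.map_mul, hcf, Polynomial.mul_coeff_zero, ha2, hb2, one_mul]

/-! Both the inclusion of scalars `K → A_n` and the constant coefficient `A_n → K` commute with the
involutions, and the second is a retraction onto the first. Hence each carries norm-one elements to
norm-one elements, and `U` is the product of the scalars in it with the kernel `U₀` of the constant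
coefficient: `a = a₀ · (a₀⁻¹ a)`, where `a₀⁻¹` is just `σ a₀`. -/

section NormOneSubmonoid

variable {M N : Type*} [CommMonoid M] [CommMonoid N]

/-- The submonoid of elements `a` with `a * τ a = 1`, for an endomorphism `τ` of a commutative
monoid: the norm-one elements when `τ` is an involution. It is encoded as the kernel of the norm
`a ↦ a * τ a`. Its elements are units, so it is in fact a group. -/
def normOneSubmonoid (τ : M →* M) : Submonoid M :=
  MonoidHom.mker (MonoidHom.id M * τ)

theorem mem_normOneSubmonoid {τ : M →* M} {a : M} : a ∈ normOneSubmonoid τ ↔ a * τ a = 1 :=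
  Iff.rfl

theorem map_mem_normOneSubmonoid {τ : M →* M} {σ : N →* N} {f : M →* N}
    (hf : Function.Semiconj f τ σ) {a : M} (ha : a ∈ normOneSubmonoid τ) :
    f a ∈ normOneSubmonoid σ := by
  rw [mem_normOneSubmonoid, ← hf a, ← map_mul, mem_normOneSubmonoid.mp ha, map_one]

theorem apply_mem_normOneSubmonoid {τ : M →* M} {a : M} (ha : a ∈ normOneSubmonoid τ) :
    τ a ∈ normOneSubmonoid τ :=
  map_mem_normOneSubmonoid (fun _ => rfl) ha

variable {τ : M →* M} {σ : N →* N} {ι : N →* M} {ε : M →* N}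

theorem map_mul_map_apply_mul_cancel {c : N} (hc : c ∈ normOneSubmonoid σ) (a : M) :
    ι c * (ι (σ c) * a) = a := by
  rw [← mul_assoc, ← map_mul, mem_normOneSubmonoid.mp hc, map_one, one_mul]

theorem map_apply_mul_map_mul_cancel {c : N} (hc : c ∈ normOneSubmonoid σ) (a : M) :
    ι (σ c) * (ι c * a) = a := by
  rw [mul_left_comm, map_mul_map_apply_mul_cancel hc]

theorem map_apply_retraction_mul_mem_inf_mker (hι : Function.Semiconj ι σ τ)
    (hε : Function.Semiconj ε τ σ) (hει : Function.LeftInverse ε ι) {a : M}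
    (ha : a ∈ normOneSubmonoid τ) :
    ι (σ (ε a)) * a ∈ normOneSubmonoid τ ⊓ MonoidHom.mker ε := by
  have hεa : ε a ∈ normOneSubmonoid σ := map_mem_normOneSubmonoid hε ha
  refine ⟨mul_mem (map_mem_normOneSubmonoid hι (apply_mem_normOneSubmonoid hεa)) ha, ?_⟩
  rw [SetLike.mem_coe, MonoidHom.mem_mker, map_mul, hει, mul_comm, mem_normOneSubmonoid.mp hεa]

/-- The splitting `(c, u) ↦ ι c * u` of the norm-one elements of `M` induced by an equivariant
retraction `ε` of `M` onto `N` with equivariant section `ι`. -/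
def normOneSubmonoidProdEquiv (hι : Function.Semiconj ι σ τ) (hε : Function.Semiconj ε τ σ)
    (hει : Function.LeftInverse ε ι) :
    normOneSubmonoid σ × ↥(normOneSubmonoid τ ⊓ MonoidHom.mker ε) ≃* normOneSubmonoid τ where
  toFun x := ⟨ι x.1 * x.2, mul_mem (map_mem_normOneSubmonoid hι x.1.2) x.2.2.1⟩
  invFun a := (⟨ε a, map_mem_normOneSubmonoid hε a.2⟩,
    ⟨ι (σ (ε a)) * a, map_apply_retraction_mul_mem_inf_mker hι hε hει a.2⟩)
  left_inv := by
    rintro ⟨⟨c, hc⟩, ⟨u, hu⟩⟩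
    have hεcu : ε (ι c * u) = c := by
      rw [map_mul, hει, MonoidHom.mem_mker.mp hu.2, mul_one]
    ext
    · exact hεcu
    · simp only [hεcu, map_apply_mul_map_mul_cancel hc]
  right_inv a := Subtype.ext (map_mul_map_apply_mul_cancel (map_mem_normOneSubmonoid hε a.2) _)
  map_mul' x y := by
    ext
    simp only [Prod.fst_mul, Prod.snd_mul, Submonoid.coe_mul, map_mul, mul_mul_mul_comm]

end NormOneSubmonoid

section TruncPoly

variable {K : Type} [CommRing K] {n : ℕ}

/-- The constant coefficient `K[x]/(x^n) → K` as a ring homomorphism, that is, evaluation at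
`0`. -/
def trConstCoeff (K : Type) [CommRing K] {n : ℕ} (hn : 0 < n) : TruncPoly K n →+* K :=
  AdjoinRoot.lift (RingHom.id K) 0 (by simp [hn.ne'])

theorem trConstCoeff_of (hn : 0 < n) (c : K) :
    trConstCoeff K hn (AdjoinRoot.of (X ^ n : K[X]) c) = c :=
  AdjoinRoot.lift_of _

theorem trConstCoeff_root (hn : 0 < n) :
    trConstCoeff K hn (AdjoinRoot.root (X ^ n : K[X])) = 0 :=
  AdjoinRoot.lift_root _

theorem trCoeff_zero (hn : 0 < n) (a : TruncPoly K n) :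
    trCoeff K n a 0 = trConstCoeff K hn a := by
  obtain ⟨f, rfl⟩ := AdjoinRoot.mk_surjective a
  rw [trCoeff, AdjoinRoot.modByMonicHom_mk, coeff_zero_eq_eval_zero, trConstCoeff,
    AdjoinRoot.lift_mk]
  exact eval₂_modByMonic_eq_self_of_root (by simp [hn.ne'])

theorem trStar_of (σ : K →+* K) (c : K) :
    trStar K σ n (AdjoinRoot.of (X ^ n : K[X]) c) = AdjoinRoot.of (X ^ n : K[X]) (σ c) :=
  AdjoinRoot.lift_of _

theorem trStar_root (σ : K →+* K) :
    trStar K σ n (AdjoinRoot.root (X ^ n : K[X])) = -AdjoinRoot.root (X ^ n : K[X]) :=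
  AdjoinRoot.lift_root _

theorem trConstCoeff_trStar (σ : K →+* K) (hn : 0 < n) (a : TruncPoly K n) :
    trConstCoeff K hn (trStar K σ n a) = σ (trConstCoeff K hn a) := by
  suffices h : (trConstCoeff K hn).comp (trStar K σ n) = σ.comp (trConstCoeff K hn) from
    RingHom.congr_fun h a
  apply AdjoinRoot.ringHom_ext
  · ext c
    simp only [RingHom.comp_apply, trStar_of, trConstCoeff_of]
  · simp only [RingHom.comp_apply, trStar_root, map_neg, trConstCoeff_root, neg_zero, map_zero]

theorem normOne_decomposition_general (σ : K →+* K) (hn : 0 < n) :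
    ∃ e : normOneSubmonoid (σ : K →* K) ×
        ↥(normOneSubmonoid (trStar K σ n : TruncPoly K n →* TruncPoly K n) ⊓
          MonoidHom.mker (trConstCoeff K hn : TruncPoly K n →* K)) ≃*
        normOneSubmonoid (trStar K σ n : TruncPoly K n →* TruncPoly K n),
      ∀ x, (e x : TruncPoly K n) = AdjoinRoot.of (X ^ n : K[X]) ↑x.1 * (↑x.2 : TruncPoly K n) :=
  ⟨normOneSubmonoidProdEquiv (ι := (AdjoinRoot.of (X ^ n : K[X]) : K →* TruncPoly K n))
      (fun c => (trStar_of σ c).symm) (trConstCoeff_trStar σ hn) (trConstCoeff_of hn),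
    fun _ => rfl⟩

end TruncPoly

theorem normOneGroupConstOne_eq_inf_mker {K : Type} [Field K] (σ : K →+* K) {n : ℕ}
    (hn : 0 < n) :
    normOneGroupConstOne K σ n hn =
      normOneSubmonoid (trStar K σ n : TruncPoly K n →* TruncPoly K n) ⊓
        MonoidHom.mker (trConstCoeff K hn : TruncPoly K n →* K) := by
  ext a
  exact and_congr_right fun _ => by
    rw [trCoeff_zero hn]
    rfl

/-- `(λ, u) ↦ λ·u` is a group isomorphism
`N_{K/k}⁻¹(1) × U₀ ≃ U = {a ∈ A_n : a·a* = 1}`. -/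
theorem normOne_decomposition
    (p t q : ℕ) (hp : p.Prime) (hp2 : Odd p) (ht : 0 < t) (hq : q = p ^ t)
    (k K : Type) [Field k] [Fintype k] [Field K] [Fintype K] [Algebra k K]
    (hcardk : Fintype.card k = q) (hcardK : Fintype.card K = q ^ 2)
    (Δ : K) (hΔ : Δ ∉ Set.range (algebraMap k K))
    (hΔ2 : Δ ^ 2 ∈ Set.range (algebraMap k K))
    (σ : K →+* K) (hσk : ∀ c : k, σ (algebraMap k K c) = algebraMap k K c)
    (hσne : σ ≠ RingHom.id K) (hσΔ : σ Δ = -Δ)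
    (n : ℕ) (hn : 0 < n) :
    ∃ e : normOneK K σ × normOneGroupConstOne K σ n hn ≃* normOneGroup K σ n,
      ∀ x : normOneK K σ × normOneGroupConstOne K σ n hn,
        (e x : TruncPoly K n) = AdjoinRoot.of (X ^ n : K[X]) ↑x.1 * (↑x.2 : TruncPoly K n) := by
  rw [normOneGroupConstOne_eq_inf_mker]
  exact normOne_decomposition_general σ hn
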